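/- Let v_1 ≥ v_2 ≥ ⋯ ≥ v_n ≥ 0 with v_1 > 0. Let C = { WTP({i,…,j}) : 1 ≤ i ≤ j ≤ n } be the set of willingness-to-pay values of all consecutive-index intervals, and for CV ∈ C with CV > 0 let k(CV) be the number of subgroups closed by the greedy procedure with threshold CV. Then opt_WTP = max_{CV ∈ C, CV > 0} k(CV)·CV. Moreover, for a maximizing CV, the grouping {Ĝ^1,…,Ĝ^{k−1}, Ĝ^k ∪ Ĝ^{k+1}} (the k closed greedy subgroups with the leftover tail Ĝ^{k+1} merged into the last one) is a continuous grouping whose total willingness to pay equals opt_WTP. -/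

import Mathlib

open scoped Classical

noncomputable section

/-- The willingness to pay of a subgroup `S` of members, where `v` lists the members'
valuations (non-increasing in the index): `WTP(S) = max_{1 ≤ i ≤ |S|} i · w_i`, where
`w_1 ≥ ⋯ ≥ w_m` are the valuations of the members of `S` in non-increasing order.
Since `v` is non-increasing, the rank of member `a` in `S` is `|{c ∈ S : c ≤ a}|`. -/
def WTP (v : ℕ → ℝ) (S : Finset ℕ) : ℝ :=
  sSup ((fun a => ((S.filter (fun c => c ≤ a)).card : ℝ) * v a) '' (S : Set ℕ))

/-- The total willingness to pay of a grouping `𝒢`: listing the subgroup values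
non-increasingly as `W_1 ≥ ⋯ ≥ W_k`, it is `max_{1 ≤ j ≤ k} j · W_j`.  Equivalently,
it is the max over `G ∈ 𝒢` of `|{G' ∈ 𝒢 : WTP(G') ≥ WTP(G)}| · WTP(G)`. -/
def WTPtotal (v : ℕ → ℝ) (𝒢 : Finset (Finset ℕ)) : ℝ :=
  sSup ((fun G => ((𝒢.filter (fun G' => WTP v G ≤ WTP v G')).card : ℝ) * WTP v G) ''
    (𝒢 : Set (Finset ℕ)))

/-- `𝒢` is a grouping of the members `{1, …, n}`: a partition into nonempty subgroups. -/
def IsGrouping (n : ℕ) (𝒢 : Finset (Finset ℕ)) : Prop :=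
  (∀ G ∈ 𝒢, G.Nonempty) ∧
  (𝒢 : Set (Finset ℕ)).PairwiseDisjoint id ∧
  𝒢.sup id = Finset.Icc 1 n

/-- A grouping is continuous if every subgroup is a set of consecutive indices. -/
def ContinuousGrouping (𝒢 : Finset (Finset ℕ)) : Prop :=
  ∀ G ∈ 𝒢, ∀ a ∈ G, ∀ c ∈ G, ∀ b, a ≤ b → b ≤ c → b ∈ G

/-- `GreedyBoundaries v n CV k N` says that the greedy procedure with threshold `CV`,
scanning members `1, …, n` (with valuations `v_1 ≥ ⋯ ≥ v_n`) in order, closes exactly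
`k` subgroups, the `j`-th closed subgroup being `Ĝ^j = {N_{j-1}+1, …, N_j}`:
a subgroup is closed the first time its size `s` and last-added member `i`
satisfy `s · v_i ≥ CV`, and the members after `N_k` never close a subgroup
(the leftover tail is `Ĝ^{k+1} = {N_k + 1, …, n}`). -/
def GreedyBoundaries (v : ℕ → ℝ) (n : ℕ) (CV : ℝ) (k : ℕ) (N : ℕ → ℕ) : Prop :=
  N 0 = 0 ∧
  (∀ j, 1 ≤ j → j ≤ k →
    N (j - 1) < N j ∧ N j ≤ n ∧
    CV ≤ ((N j - N (j - 1) : ℕ) : ℝ) * v (N j) ∧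
    (∀ i, N (j - 1) < i → i < N j → ((i - N (j - 1) : ℕ) : ℝ) * v i < CV)) ∧
  (∀ i, N k < i → i ≤ n → ((i - N k : ℕ) : ℝ) * v i < CV)

/-!
Fix a threshold `CV > 0`. A subgroup `G` with `WTP(G) ≥ CV` has a head `{c ∈ G : c ≤ a}` of some
size `r` with `r · v_a ≥ CV`. Order a disjoint family of such subgroups by `a`: the first `m` heads
fit into `{1, …, a_m}`, so by monotonicity of `v` the greedy procedure closes its `m`-th subgroup
after at most as many members as these heads contain. Hence it closes at least as many subgroups
as any such family has. If an optimal grouping attains `m · W`, greedy at threshold `W` thus yields at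
least `m` intervals worth at least `W`. Raising the threshold to the least value of these intervals
(with the tail merged into the last one) loses none of them and makes the threshold a candidate
value, whose merged greedy grouping is then optimal too.
-/

section Greedy

open Finset

variable {v : ℕ → ℝ} {n k : ℕ} {CV : ℝ} {N : ℕ → ℕ} {𝒢 : Finset (Finset ℕ)}

lemma card_filter_mul_le_WTP (v : ℕ → ℝ) {S : Finset ℕ} {a : ℕ} (ha : a ∈ S) :
    (#{c ∈ S | c ≤ a} : ℝ) * v a ≤ WTP v S :=
  le_csSup (S.finite_toSet.image _).bddAbove ⟨a, ha, rfl⟩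

lemma exists_mem_WTP_eq (v : ℕ → ℝ) {S : Finset ℕ} (hS : S.Nonempty) :
    ∃ a ∈ S, WTP v S = (#{c ∈ S | c ≤ a} : ℝ) * v a := by
  rw [WTP, ← sup'_eq_csSup_image S hS]
  exact exists_mem_eq_sup' hS _

lemma nonempty_of_WTP_pos {S : Finset ℕ} (hS : 0 < WTP v S) : S.Nonempty := by
  rw [nonempty_iff_ne_empty]
  rintro rfl
  simp [WTP] at hS

lemma mul_le_WTP_Icc (v : ℕ → ℝ) {p a q : ℕ} (hpa : p < a) (haq : a ≤ q) :
    ((a - p : ℕ) : ℝ) * v a ≤ WTP v (Icc (p + 1) q) := by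
  have head_eq : {c ∈ Icc (p + 1) q | c ≤ a} = Icc (p + 1) a := by
    ext c
    simp only [mem_filter, mem_Icc]
    omega
  simpa [head_eq] using card_filter_mul_le_WTP v (mem_Icc.2 ⟨hpa, haq⟩)

lemma card_filter_mul_le_WTPtotal (v : ℕ → ℝ) {G : Finset ℕ} (hG : G ∈ 𝒢) :
    (#{G' ∈ 𝒢 | WTP v G ≤ WTP v G'} : ℝ) * WTP v G ≤ WTPtotal v 𝒢 :=
  le_csSup (𝒢.finite_toSet.image _).bddAbove ⟨G, hG, rfl⟩

lemma exists_mem_WTPtotal_eq (v : ℕ → ℝ) (h𝒢 : 𝒢.Nonempty) :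
    ∃ G ∈ 𝒢, WTPtotal v 𝒢 = (#{G' ∈ 𝒢 | WTP v G ≤ WTP v G'} : ℝ) * WTP v G := by
  rw [WTPtotal, ← sup'_eq_csSup_image 𝒢 h𝒢]
  exact exists_mem_eq_sup' h𝒢 _

lemma nonempty_of_WTPtotal_pos (h𝒢 : 0 < WTPtotal v 𝒢) : 𝒢.Nonempty := by
  rw [nonempty_iff_ne_empty]
  rintro rfl
  simp [WTPtotal] at h𝒢

lemma card_mul_le_WTPtotal (h𝒢 : 𝒢.Nonempty) (hCV : ∀ G ∈ 𝒢, CV ≤ WTP v G) :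
    (#𝒢 : ℝ) * CV ≤ WTPtotal v 𝒢 := by
  obtain ⟨G, hG, hmin⟩ := 𝒢.exists_min_image (WTP v) h𝒢
  calc (#𝒢 : ℝ) * CV ≤ #𝒢 * WTP v G := by gcongr; exact hCV G hG
    _ = #{G' ∈ 𝒢 | WTP v G ≤ WTP v G'} * WTP v G := by rw [filter_true_of_mem hmin]
    _ ≤ WTPtotal v 𝒢 := card_filter_mul_le_WTPtotal v hG

lemma isGrouping_zero_empty : IsGrouping 0 ∅ := by
  simp [IsGrouping]

lemma IsGrouping.subset_Icc (h : IsGrouping n 𝒢) {G : Finset ℕ} (hG : G ∈ 𝒢) : G ⊆ Icc 1 n :=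
  h.2.2 ▸ le_sup (f := id) hG

lemma IsGrouping.Icc_succ_notMem (h : IsGrouping n 𝒢) {q : ℕ} (hq : n < q) :
    Icc (n + 1) q ∉ 𝒢 := by
  intro hmem
  have := h.subset_Icc hmem (right_mem_Icc.2 hq)
  exact hq.not_ge (mem_Icc.1 this).2

lemma IsGrouping.insert_Icc_succ (h : IsGrouping n 𝒢) {q : ℕ} (hq : n < q) :
    IsGrouping q (insert (Icc (n + 1) q) 𝒢) := by
  refine ⟨?_, ?_, ?_⟩
  · simpa only [forall_mem_insert] using ⟨nonempty_Icc.2 hq, h.1⟩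
  · rw [coe_insert]
    refine h.2.1.insert fun G hG _ => disjoint_left.2 fun c hc hcG => ?_
    have := h.subset_Icc hG hcG
    simp only [id_eq, mem_Icc] at hc this
    omega
  · rw [sup_insert, h.2.2, id_eq]
    ext c
    simp only [sup_eq_union, mem_union, mem_Icc]
    omega

lemma isGrouping_singleton_Icc (hn : 1 ≤ n) : IsGrouping n {Icc 1 n} :=
  isGrouping_zero_empty.insert_Icc_succ hn

lemma finite_setOf_isGrouping (n : ℕ) : {𝒢 | IsGrouping n 𝒢}.Finite :=
  (Icc 1 n).powerset.powerset.finite_toSet.subset fun _ h =>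
    mem_powerset.2 fun _ hG => mem_powerset.2 (h.subset_Icc hG)

lemma exists_isGrouping_forall_WTPtotal_le (v : ℕ → ℝ) (hn : 1 ≤ n) :
    ∃ 𝒢, IsGrouping n 𝒢 ∧ ∀ ℋ, IsGrouping n ℋ → WTPtotal v ℋ ≤ WTPtotal v 𝒢 :=
  Set.exists_max_image _ (WTPtotal v) (finite_setOf_isGrouping n) ⟨_, isGrouping_singleton_Icc hn⟩

lemma le_WTPtotal_singleton_Icc (v : ℕ → ℝ) (hn : 1 ≤ n) : v 1 ≤ WTPtotal v {Icc 1 n} := by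
  have hWTP : v 1 ≤ WTP v (Icc 1 n) := by simpa using mul_le_WTP_Icc v one_pos hn
  simpa using card_mul_le_WTPtotal (singleton_nonempty _) (by simpa using hWTP)

lemma ContinuousGrouping.insert_Icc (h : ContinuousGrouping 𝒢) (p q : ℕ) :
    ContinuousGrouping (insert (Icc p q) 𝒢) := by
  refine (forall_mem_insert _ _ _).2 ⟨fun a ha c hc b hab hbc => ?_, h⟩
  exact mem_Icc.2 ⟨(mem_Icc.1 ha).1.trans hab, hbc.trans (mem_Icc.1 hc).2⟩

/-- The first `k` consecutive intervals `{N_{j-1}+1, …, N_j}` cut out by the boundaries `N`; for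
greedy boundaries these are the closed subgroups `Ĝ^1, …, Ĝ^k`. -/
def boundaryIntervals (N : ℕ → ℕ) (k : ℕ) : Finset (Finset ℕ) :=
  (Icc 1 k).image fun j => Icc (N (j - 1) + 1) (N j)

lemma boundaryIntervals_succ (N : ℕ → ℕ) (k : ℕ) :
    boundaryIntervals N (k + 1) = insert (Icc (N k + 1) (N (k + 1))) (boundaryIntervals N k) := by
  rw [boundaryIntervals, ← insert_Icc_right_eq_Icc_add_one (by omega), image_insert,
    Nat.add_sub_cancel, boundaryIntervals]

lemma isGrouping_boundaryIntervals (h0 : N 0 = 0) (hN : ∀ j < k, N j < N (j + 1)) :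
    IsGrouping (N k) (boundaryIntervals N k) := by
  induction k with
  | zero => rw [h0]; exact isGrouping_zero_empty
  | succ k ih =>
    rw [boundaryIntervals_succ]
    exact (ih fun j hj => hN j (hj.trans k.lt_succ_self)).insert_Icc_succ (hN k k.lt_succ_self)

lemma card_boundaryIntervals (h0 : N 0 = 0) (hN : ∀ j < k, N j < N (j + 1)) :
    #(boundaryIntervals N k) = k := by
  induction k with
  | zero => rfl
  | succ k ih =>
    have hN' : ∀ j < k, N j < N (j + 1) := fun j hj => hN j (hj.trans k.lt_succ_self)
    rw [boundaryIntervals_succ, card_insert_of_notMem, ih hN']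
    exact (isGrouping_boundaryIntervals h0 hN').Icc_succ_notMem (hN k k.lt_succ_self)

lemma continuousGrouping_boundaryIntervals (N : ℕ → ℕ) (k : ℕ) :
    ContinuousGrouping (boundaryIntervals N k) := by
  induction k with
  | zero => simp [ContinuousGrouping, boundaryIntervals]
  | succ k ih =>
    rw [boundaryIntervals_succ]
    exact ih.insert_Icc _ _

/-- The grouping `{Ĝ^1, …, Ĝ^{k-1}, Ĝ^k ∪ Ĝ^{k+1}}` of `{1, …, n}` in which the leftover tail is
merged into the last closed subgroup. It is meaningful for `1 ≤ k` only, since `k - 1` is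
truncated. -/
def mergedGrouping (n k : ℕ) (N : ℕ → ℕ) : Finset (Finset ℕ) :=
  boundaryIntervals N (k - 1) ∪ {Icc (N (k - 1) + 1) n}

lemma mergedGrouping_succ (n k : ℕ) (N : ℕ → ℕ) :
    mergedGrouping n (k + 1) N = insert (Icc (N k + 1) n) (boundaryIntervals N k) := by
  rw [mergedGrouping, Nat.add_sub_cancel, union_comm, insert_eq]

lemma mergedGrouping_nonempty (n k : ℕ) (N : ℕ → ℕ) : (mergedGrouping n k N).Nonempty :=
  ⟨_, mem_union_right _ (mem_singleton_self _)⟩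

lemma continuousGrouping_mergedGrouping (n k : ℕ) (N : ℕ → ℕ) :
    ContinuousGrouping (mergedGrouping n k N) := by
  rw [mergedGrouping, union_comm, ← insert_eq]
  exact (continuousGrouping_boundaryIntervals N _).insert_Icc _ _

lemma exists_Icc_eq_of_mem_mergedGrouping {G : Finset ℕ} (hG : G ∈ mergedGrouping n k N) :
    ∃ p q, G = Icc p q := by
  simp only [mergedGrouping, boundaryIntervals, mem_union, mem_image, mem_singleton] at hG
  rcases hG with ⟨j, -, rfl⟩ | rfl
  exacts [⟨_, _, rfl⟩, ⟨_, _, rfl⟩]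

namespace GreedyBoundaries

lemma closes (h : GreedyBoundaries v n CV k N) {j : ℕ} (hj : j < k) :
    N j < N (j + 1) ∧ N (j + 1) ≤ n ∧ CV ≤ ((N (j + 1) - N j : ℕ) : ℝ) * v (N (j + 1)) ∧
      ∀ i, N j < i → i < N (j + 1) → ((i - N j : ℕ) : ℝ) * v i < CV :=
  h.2.1 (j + 1) j.succ_pos hj

lemma lt_and_succ_le (h : GreedyBoundaries v n CV k N) {m b : ℕ} (hm : m ≤ k) (hmb : N m < b)
    (hbn : b ≤ n) (hb : CV ≤ ((b - N m : ℕ) : ℝ) * v b) : m < k ∧ N (m + 1) ≤ b := by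
  have hmk : m < k := by
    refine hm.lt_of_ne ?_
    rintro rfl
    exact (h.2.2 b hmb hbn).not_ge hb
  refine ⟨hmk, not_lt.1 fun hlt => ?_⟩
  exact ((h.closes hmk).2.2.2 b hmb hlt).not_ge hb

lemma isGrouping_mergedGrouping (h : GreedyBoundaries v n CV k N) (hk : 1 ≤ k) :
    IsGrouping n (mergedGrouping n k N) := by
  obtain ⟨k, rfl⟩ := Nat.exists_eq_add_of_le' hk
  obtain ⟨hlt, hle, -⟩ := h.closes k.lt_succ_self
  rw [mergedGrouping_succ]
  exact (isGrouping_boundaryIntervals h.1 fun j hj =>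
    (h.closes (hj.trans k.lt_succ_self)).1).insert_Icc_succ (hlt.trans_le hle)

lemma card_mergedGrouping (h : GreedyBoundaries v n CV k N) (hk : 1 ≤ k) :
    #(mergedGrouping n k N) = k := by
  obtain ⟨k, rfl⟩ := Nat.exists_eq_add_of_le' hk
  obtain ⟨hlt, hle, -⟩ := h.closes k.lt_succ_self
  have hN : ∀ j < k, N j < N (j + 1) := fun j hj => (h.closes (hj.trans k.lt_succ_self)).1
  rw [mergedGrouping_succ, card_insert_of_notMem, card_boundaryIntervals h.1 hN]
  exact (isGrouping_boundaryIntervals h.1 hN).Icc_succ_notMem (hlt.trans_le hle)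

lemma le_WTP_of_mem_mergedGrouping (h : GreedyBoundaries v n CV k N) (hk : 1 ≤ k) {G : Finset ℕ}
    (hG : G ∈ mergedGrouping n k N) : CV ≤ WTP v G := by
  have le_WTP_Icc : ∀ {j q}, j < k → N (j + 1) ≤ q → CV ≤ WTP v (Icc (N j + 1) q) :=
    fun hj hq => (h.closes hj).2.2.1.trans (mul_le_WTP_Icc v (h.closes hj).1 hq)
  obtain ⟨k, rfl⟩ := Nat.exists_eq_add_of_le' hk
  rw [mergedGrouping_succ, mem_insert, boundaryIntervals, mem_image] at hG
  rcases hG with rfl | ⟨j, hj, rfl⟩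
  · exact le_WTP_Icc k.lt_succ_self (h.closes k.lt_succ_self).2.1
  · obtain ⟨hj1, hjk⟩ := mem_Icc.1 hj
    exact le_WTP_Icc (by omega) (Nat.sub_add_cancel hj1 ▸ le_rfl)

lemma mul_le_WTPtotal_mergedGrouping (h : GreedyBoundaries v n CV k N) (hk : 1 ≤ k) :
    (k : ℝ) * CV ≤ WTPtotal v (mergedGrouping n k N) := by
  simpa only [h.card_mergedGrouping hk] using card_mul_le_WTPtotal (mergedGrouping_nonempty n k N)
    fun _ => h.le_WTP_of_mem_mergedGrouping hk

end GreedyBoundaries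

lemma exists_greedyBoundaries (v : ℕ → ℝ) (n : ℕ) (CV : ℝ) :
    ∃ k N, GreedyBoundaries v n CV k N := by
  induction n with
  | zero => exact ⟨0, fun _ => 0, rfl, by omega, by omega⟩
  | succ n ih =>
    obtain ⟨k, N, h0, hclosed, htail⟩ := ih
    have hNk : N k ≤ n := by
      rcases k.eq_zero_or_pos with rfl | hk
      · omega
      · exact (hclosed k hk le_rfl).2.1
    by_cases hclose : CV ≤ ((n + 1 - N k : ℕ) : ℝ) * v (n + 1)
    · refine ⟨k + 1, Function.update N (k + 1) (n + 1), ?_, fun j h1 hj => ?_, ?_⟩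
      · rwa [Function.update_of_ne (by omega)]
      · rw [Function.update_of_ne (show j - 1 ≠ k + 1 by omega)]
        obtain rfl | hjk : j = k + 1 ∨ j ≤ k := by omega
        · rw [Function.update_self, Nat.add_sub_cancel]
          exact ⟨by omega, le_rfl, hclose, fun i hi hin => htail i hi (by omega)⟩
        · rw [Function.update_of_ne (by omega)]
          obtain ⟨hlt, hle, hCV, hfirst⟩ := hclosed j h1 hjk
          exact ⟨hlt, hle.trans n.le_succ, hCV, hfirst⟩
      · rw [Function.update_self]
        omega
    · refine ⟨k, N, h0, fun j h1 hj => ?_, fun i hi hin => ?_⟩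
      · obtain ⟨hlt, hle, hCV, hfirst⟩ := hclosed j h1 hj
        exact ⟨hlt, hle.trans n.le_succ, hCV, hfirst⟩
      · obtain rfl | hin : i = n + 1 ∨ i ≤ n := by omega
        exacts [not_le.1 hclose, htail i hi hin]

/-- `F` is a packing for the threshold `CV`: a family of pairwise disjoint subgroups of
`{1, …, n}`, not necessarily covering, each of which is willing to pay at least `CV`. Packings
are what the number of subgroups closed by the greedy procedure is compared with. -/
structure IsPacking (v : ℕ → ℝ) (n : ℕ) (CV : ℝ) (F : Finset (Finset ℕ)) : Prop where
  subset_Icc : ∀ G ∈ F, G ⊆ Icc 1 n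
  pairwiseDisjoint : (F : Set (Finset ℕ)).PairwiseDisjoint id
  le_WTP : ∀ G ∈ F, CV ≤ WTP v G

lemma IsGrouping.isPacking_filter (h : IsGrouping n 𝒢) (v : ℕ → ℝ) (CV : ℝ) :
    IsPacking v n CV {G ∈ 𝒢 | CV ≤ WTP v G} where
  subset_Icc _ hG := h.subset_Icc (mem_filter.1 hG).1
  pairwiseDisjoint := h.2.1.subset (coe_subset.2 (filter_subset _ _))
  le_WTP _ hG := (mem_filter.1 hG).2

lemma IsGrouping.isPacking (h : IsGrouping n 𝒢) (hCV : ∀ G ∈ 𝒢, CV ≤ WTP v G) :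
    IsPacking v n CV 𝒢 := by
  simpa only [filter_true_of_mem hCV] using h.isPacking_filter v CV

lemma sum_card_le_of_subset_Icc {ι : Type*} {s : Finset ι} {H : ι → Finset ℕ} {b : ℕ}
    (hdisj : (s : Set ι).PairwiseDisjoint H) (hsub : ∀ i ∈ s, H i ⊆ Icc 1 b) :
    ∑ i ∈ s, #(H i) ≤ b :=
  calc ∑ i ∈ s, #(H i) = #(s.biUnion H) := (card_biUnion hdisj).symm
    _ ≤ #(Icc 1 b) := card_le_card (biUnion_subset.2 hsub)
    _ = b := by rw [Nat.card_Icc, Nat.add_sub_cancel]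

-- The bound on `N #s` is what carries the induction, which adds the heads by increasing end `a i`.
lemma GreedyBoundaries.card_le_and_le_sum_card (hv : AntitoneOn v (Set.Icc 1 n)) (hCV : 0 < CV)
    (h : GreedyBoundaries v n CV k N) {ι : Type*} {s : Finset ι} {H : ι → Finset ℕ} {a : ι → ℕ}
    (hsub : ∀ i ∈ s, H i ⊆ Icc 1 (a i)) (ha : ∀ i ∈ s, a i ≤ n)
    (hdisj : (s : Set ι).PairwiseDisjoint H) (hpay : ∀ i ∈ s, CV ≤ (#(H i) : ℝ) * v (a i)) :
    #s ≤ k ∧ N #s ≤ ∑ i ∈ s, #(H i) := by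
  induction s using Finset.induction_on_max_value a with
  | empty => simp [h.1]
  | insert x s hx hmax ih =>
    simp only [forall_mem_insert] at hsub ha hpay
    obtain ⟨hk, hN⟩ := ih hsub.2 ha.2 (hdisj.subset (by simp)) hpay.2
    have hsum : ∑ i ∈ insert x s, #(H i) ≤ a x :=
      sum_card_le_of_subset_Icc hdisj <|
        (forall_mem_insert _ _ _).2 ⟨hsub.1, fun i hi =>
          (hsub.2 i hi).trans (Icc_subset_Icc_right (hmax i hi))⟩
    have hprod : 0 < (#(H x) : ℝ) * v (a x) := hCV.trans_le hpay.1
    have hvx : 0 < v (a x) := pos_of_mul_pos_right hprod (Nat.cast_nonneg _)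
    have hHx : 0 < #(H x) := Nat.cast_pos.1 (pos_of_mul_pos_left hprod hvx.le)
    rw [card_insert_of_notMem hx]
    rw [sum_insert hx] at hsum ⊢
    set b := #(H x) + ∑ i ∈ s, #(H i)
    have hvb : v (a x) ≤ v b := hv ⟨by omega, by omega⟩ ⟨by omega, ha.1⟩ hsum
    refine h.lt_and_succ_le hk (by omega) (hsum.trans ha.1) (hpay.1.trans ?_)
    gcongr
    omega

lemma IsPacking.card_le {F : Finset (Finset ℕ)} (hF : IsPacking v n CV F)
    (hv : AntitoneOn v (Set.Icc 1 n)) (hCV : 0 < CV) (h : GreedyBoundaries v n CV k N) :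
    #F ≤ k := by
  have exists_head : ∀ G : Finset ℕ, ∃ a, G ∈ F →
      a ∈ G ∧ WTP v G = (#{c ∈ G | c ≤ a} : ℝ) * v a := by
    intro G
    by_cases hG : G ∈ F
    · obtain ⟨a, ha⟩ := exists_mem_WTP_eq v (nonempty_of_WTP_pos (hCV.trans_le (hF.le_WTP G hG)))
      exact ⟨a, fun _ => ha⟩
    · exact ⟨0, fun hG' => absurd hG' hG⟩
  choose a ha using exists_head
  refine (h.card_le_and_le_sum_card hv hCV (H := fun G => {c ∈ G | c ≤ a G}) (a := a)
    ?_ ?_ ?_ ?_).1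
  · intro G hG c hc
    obtain ⟨hcG, hca⟩ := mem_filter.1 hc
    exact mem_Icc.2 ⟨(mem_Icc.1 (hF.subset_Icc G hG hcG)).1, hca⟩
  · exact fun G hG => (mem_Icc.1 (hF.subset_Icc G hG (ha G hG).1)).2
  · exact hF.pairwiseDisjoint.mono_on fun G _ => filter_subset _ G
  · exact fun G hG => (hF.le_WTP G hG).trans_eq (ha G hG).2

lemma IsPacking.exists_Icc_forall_card_le {F : Finset (Finset ℕ)} (hF : IsPacking v n CV F)
    (hF0 : F.Nonempty) (hv : AntitoneOn v (Set.Icc 1 n)) (hCV : 0 < CV) :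
    ∃ i j, 1 ≤ i ∧ i ≤ j ∧ j ≤ n ∧ CV ≤ WTP v (Icc i j) ∧
      ∀ k N, GreedyBoundaries v n (WTP v (Icc i j)) k N → #F ≤ k := by
  obtain ⟨m, M, hM⟩ := exists_greedyBoundaries v n CV
  have hFm : #F ≤ m := hF.card_le hv hCV hM
  have hm : 1 ≤ m := hF0.card_pos.trans_le hFm
  have hgrouping := hM.isGrouping_mergedGrouping hm
  obtain ⟨G, hG, hmin⟩ := (mergedGrouping n m M).exists_min_image (WTP v)
    (mergedGrouping_nonempty n m M)
  have hCVG : CV ≤ WTP v G := hM.le_WTP_of_mem_mergedGrouping hm hG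
  obtain ⟨i, j, rfl⟩ := exists_Icc_eq_of_mem_mergedGrouping hG
  have hij : i ≤ j := nonempty_Icc.1 (hgrouping.1 _ hG)
  obtain ⟨hi, hj⟩ := (Icc_subset_Icc_iff hij).1 (hgrouping.subset_Icc hG)
  refine ⟨i, j, hi, hij, hj, hCVG, fun k N h => ?_⟩
  calc #F ≤ m := hFm
    _ = #(mergedGrouping n m M) := (hM.card_mergedGrouping hm).symm
    _ ≤ k := (hgrouping.isPacking hmin).card_le hv (hCV.trans_le hCVG) h

lemma IsGrouping.exists_Icc_forall_WTPtotal_le (h𝒢 : IsGrouping n 𝒢)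
    (hv : AntitoneOn v (Set.Icc 1 n)) (hpos : 0 < WTPtotal v 𝒢) :
    ∃ i j, 1 ≤ i ∧ i ≤ j ∧ j ≤ n ∧ 0 < WTP v (Icc i j) ∧
      ∀ k N, GreedyBoundaries v n (WTP v (Icc i j)) k N →
        WTPtotal v 𝒢 ≤ (k : ℝ) * WTP v (Icc i j) := by
  obtain ⟨G, hG, htotal⟩ := exists_mem_WTPtotal_eq v (nonempty_of_WTPtotal_pos hpos)
  rw [htotal] at hpos ⊢
  have hW : 0 < WTP v G := pos_of_mul_pos_right hpos (Nat.cast_nonneg _)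
  obtain ⟨i, j, hi, hij, hj, hle, hcard⟩ :=
    (h𝒢.isPacking_filter v (WTP v G)).exists_Icc_forall_card_le
      ⟨G, mem_filter.2 ⟨hG, le_rfl⟩⟩ hv hW
  refine ⟨i, j, hi, hij, hj, hW.trans_le hle, fun k N h => ?_⟩
  have := hcard k N h
  gcongr

lemma GreedyBoundaries.mul_le_of_forall_WTPtotal_le (h : GreedyBoundaries v n CV k N) {W : ℝ}
    (hW : 0 ≤ W) (hmax : ∀ 𝒢, IsGrouping n 𝒢 → WTPtotal v 𝒢 ≤ W) : (k : ℝ) * CV ≤ W := by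
  rcases k.eq_zero_or_pos with rfl | hk
  · simpa using hW
  · exact (h.mul_le_WTPtotal_mergedGrouping hk).trans (hmax _ (h.isGrouping_mergedGrouping hk))

end Greedy

theorem stmt4_general (n : ℕ) (v : ℕ → ℝ) (hn : 1 ≤ n) (hv : AntitoneOn v (Set.Icc 1 n))
    (hv1 : 0 < v 1) :
    ∃ CV : ℝ, ∃ i j : ℕ, 1 ≤ i ∧ i ≤ j ∧ j ≤ n ∧ CV = WTP v (Finset.Icc i j) ∧ 0 < CV ∧
    ∃ k : ℕ, ∃ N : ℕ → ℕ, GreedyBoundaries v n CV k N ∧ 1 ≤ k ∧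
      IsGreatest {W : ℝ | ∃ 𝒢 : Finset (Finset ℕ), IsGrouping n 𝒢 ∧ WTPtotal v 𝒢 = W}
        ((k : ℝ) * CV) ∧
      (∀ (CV' : ℝ) (i' j' : ℕ), 1 ≤ i' → i' ≤ j' → j' ≤ n →
        CV' = WTP v (Finset.Icc i' j') → 0 < CV' →
        ∀ (k' : ℕ) (N' : ℕ → ℕ), GreedyBoundaries v n CV' k' N' →
          (k' : ℝ) * CV' ≤ (k : ℝ) * CV) ∧
      (∃ 𝒢 : Finset (Finset ℕ),
        𝒢 = (Finset.Icc 1 (k - 1)).image (fun j => Finset.Icc (N (j - 1) + 1) (N j)) ∪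
              {Finset.Icc (N (k - 1) + 1) n} ∧
        IsGrouping n 𝒢 ∧ ContinuousGrouping 𝒢 ∧ WTPtotal v 𝒢 = (k : ℝ) * CV) := by
  obtain ⟨𝒢, h𝒢, hmax⟩ := exists_isGrouping_forall_WTPtotal_le v hn
  have hpos : 0 < WTPtotal v 𝒢 := hv1.trans_le <|
    (le_WTPtotal_singleton_Icc v hn).trans (hmax _ (isGrouping_singleton_Icc hn))
  obtain ⟨i, j, hi, hij, hj, hCV, hle⟩ := h𝒢.exists_Icc_forall_WTPtotal_le hv hpos
  obtain ⟨k, N, h⟩ := exists_greedyBoundaries v n (WTP v (Finset.Icc i j))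
  have hopt : WTPtotal v 𝒢 = (k : ℝ) * WTP v (Finset.Icc i j) :=
    (hle k N h).antisymm (h.mul_le_of_forall_WTPtotal_le hpos.le hmax)
  rw [hopt] at hmax hpos
  have hk : 1 ≤ k := Nat.cast_pos.1 (pos_of_mul_pos_left hpos hCV.le)
  have hgrouping := h.isGrouping_mergedGrouping hk
  have htotal := (hmax _ hgrouping).antisymm (h.mul_le_WTPtotal_mergedGrouping hk)
  refine ⟨_, i, j, hi, hij, hj, rfl, hCV, k, N, h, hk, ⟨⟨𝒢, h𝒢, hopt⟩, ?_⟩, ?_,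
    mergedGrouping n k N, rfl, hgrouping, continuousGrouping_mergedGrouping n k N, htotal⟩
  · rintro _ ⟨ℋ, hℋ, rfl⟩
    exact hmax ℋ hℋ
  · intro CV' _ _ _ _ _ _ _ k' N' h'
    exact h'.mul_le_of_forall_WTPtotal_le hpos.le hmax

/-- correctness of Algorithm 1: with `v_1 > 0`, there is a candidate
critical value `CV` — the WTP of some consecutive interval `{i,…,j}` — with `CV > 0`
such that, letting `k` be the number of subgroups closed by the greedy procedure with
threshold `CV`, the product `k · CV` equals `opt_WTP` (it is the greatest total
willingness to pay of any grouping, and it maximizes `k(CV') · CV'` over all positive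
candidate critical values `CV'`); moreover the grouping formed by the closed greedy
subgroups with the leftover tail merged into the last one is a continuous grouping
whose total willingness to pay equals `opt_WTP`. -/
theorem stmt4 (n : ℕ) (v : ℕ → ℝ) (hn : 1 ≤ n)
    (hmono : ∀ i j, 1 ≤ i → i ≤ j → j ≤ n → v j ≤ v i)
    (hnonneg : ∀ i, 1 ≤ i → i ≤ n → 0 ≤ v i)
    (hv1 : 0 < v 1) :
    ∃ CV : ℝ, ∃ i j : ℕ, 1 ≤ i ∧ i ≤ j ∧ j ≤ n ∧ CV = WTP v (Finset.Icc i j) ∧ 0 < CV ∧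
    ∃ k : ℕ, ∃ N : ℕ → ℕ, GreedyBoundaries v n CV k N ∧ 1 ≤ k ∧
      IsGreatest {W : ℝ | ∃ 𝒢 : Finset (Finset ℕ), IsGrouping n 𝒢 ∧ WTPtotal v 𝒢 = W}
        ((k : ℝ) * CV) ∧
      (∀ (CV' : ℝ) (i' j' : ℕ), 1 ≤ i' → i' ≤ j' → j' ≤ n →
        CV' = WTP v (Finset.Icc i' j') → 0 < CV' →
        ∀ (k' : ℕ) (N' : ℕ → ℕ), GreedyBoundaries v n CV' k' N' →
          (k' : ℝ) * CV' ≤ (k : ℝ) * CV) ∧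
      (∃ 𝒢 : Finset (Finset ℕ),
        𝒢 = (Finset.Icc 1 (k - 1)).image (fun j => Finset.Icc (N (j - 1) + 1) (N j)) ∪
              {Finset.Icc (N (k - 1) + 1) n} ∧
        IsGrouping n 𝒢 ∧ ContinuousGrouping 𝒢 ∧ WTPtotal v 𝒢 = (k : ℝ) * CV) :=
  stmt4_general n v hn (fun _ hi _ hj hij => hmono _ _ hi.1 hij hj.2) hv1

end
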